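/- (Evolution of the spectral embedding norm) Suppose for each k = 1,…,n there are functions λ_k : [0,1] → ℝ and ψ_k : [0,1] → ℝ^V, differentiable at a time t ∈ (0,1), satisfying W(s)ψ_k(s) = λ_k(s)D(s)ψ_k(s) and ψ_k(s)ᵀD(s)ψ_j(s) = δ_{kj} for s near t, and suppose the eigenvalues λ_1(t),…,λ_n(t) are pairwise distinct. Let I ⊆ {1,…,n} and S(x,s) = Σ_{k∈I} ψ_k(s)(x)². Then for every x∈V, ∂S/∂t (x,t) = − Σ_{k∈I} Σ_{j∈I} (ψ_jᵀ D'(t) ψ_k) ψ_k(x)ψ_j(x) + 2 Σ_{k∈I} Σ_{j∉I} [ψ_jᵀ(E − λ_k(t) D'(t))ψ_k / (λ_k(t) − λ_j(t))] ψ_k(x)ψ_j(x), where all eigenvectors and eigenvalues on the right-hand side are evaluated at time t, and D'(t) is the diagonal matrix with entries Σ_y E(x,y). -/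

import Mathlib

open Finset

/-! Stack the eigenvectors as the rows of `Ψ(s)`. The eigenvalue equations and orthonormality say
that `Ψ` diagonalises the pencil `(W, M)` by congruence: `Ψ M Ψᵀ = 1` and `Ψ W Ψᵀ = diag λ`. As `Ψ`
is invertible, `Ψ' = A Ψ` for a matrix `A` of connection coefficients, and differentiating the two
identities gives `A + Aᵀ = -Ψ M' Ψᵀ` and, off the diagonal, `A diag λ + diag λ Aᵀ = -Ψ W' Ψᵀ`. The
first determines the part of `∂S` with both indices in `I`, where `A` enters only through `A + Aᵀ`;
eliminating `Aᵀ` between the two determines the remaining entries of `A`. -/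

open Matrix Topology

lemma two_mul_sum_sum_eq_symm_add_compl {ι R : Type*} [Fintype ι] [DecidableEq ι]
    [NonAssocSemiring R] (a : ι → ι → R) (I : Finset ι) :
    2 * ∑ k ∈ I, ∑ j, a k j =
      ∑ k ∈ I, ∑ j ∈ I, (a j k + a k j) + 2 * ∑ k ∈ I, ∑ j ∈ Iᶜ, a k j := by
  simp only [← sum_add_sum_compl I, sum_add_distrib, mul_add, two_mul]
  rw [sum_comm (f := fun k j => a j k)]

section MatrixCurves

variable {𝕜 l m n : Type*} [NontriviallyNormedField 𝕜] {t : 𝕜}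

lemma hasDerivAt_matrix [Finite n] {A : 𝕜 → Matrix m n 𝕜} {A' : Matrix m n 𝕜} :
    HasDerivAt A A' t ↔ ∀ i j, HasDerivAt (fun s => A s i j) (A' i j) t := by
  have := Fintype.ofFinite n
  exact hasDerivAt_pi.trans (forall_congr' fun _ => hasDerivAt_pi)

lemma hasDerivAt_matrix_mul [Fintype m] [Finite n] {A : 𝕜 → Matrix l m 𝕜} {B : 𝕜 → Matrix m n 𝕜}
    {A' : Matrix l m 𝕜} {B' : Matrix m n 𝕜} (hA : HasDerivAt A A' t) (hB : HasDerivAt B B' t) :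
    HasDerivAt (fun s => A s * B s) (A' * B t + A t * B') t := by
  rw [hasDerivAt_matrix] at hA hB ⊢
  intro i j
  simpa only [Matrix.mul_apply, Matrix.add_apply, ← sum_add_distrib] using
    HasDerivAt.fun_sum fun k (_ : k ∈ univ) => (hA i k).fun_mul (hB k j)

lemma hasDerivAt_matrix_transpose [Finite m] [Finite n] {A : 𝕜 → Matrix m n 𝕜}
    {A' : Matrix m n 𝕜} (hA : HasDerivAt A A' t) : HasDerivAt (fun s => (A s)ᵀ) A'ᵀ t :=
  hasDerivAt_matrix.2 fun i j => hasDerivAt_matrix.1 hA j i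

lemma hasDerivAt_congruence [Fintype m] [Fintype n] {Ψ : 𝕜 → Matrix m n 𝕜}
    {W : 𝕜 → Matrix n n 𝕜} {A : Matrix m m 𝕜} {W' : Matrix n n 𝕜}
    (hΨ : HasDerivAt Ψ (A * Ψ t) t) (hW : HasDerivAt W W' t) :
    HasDerivAt (fun s => Ψ s * W s * (Ψ s)ᵀ)
      (A * (Ψ t * W t * (Ψ t)ᵀ) + Ψ t * W' * (Ψ t)ᵀ + Ψ t * W t * (Ψ t)ᵀ * Aᵀ) t := by
  convert hasDerivAt_matrix_mul (hasDerivAt_matrix_mul hΨ hW) (hasDerivAt_matrix_transpose hΨ)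
    using 1
  simp only [Matrix.transpose_mul, Matrix.add_mul, Matrix.mul_assoc]

lemma hasDerivAt_sum_sq_of_connection [Fintype m] [DecidableEq m] [Finite n]
    {Ψ : 𝕜 → Matrix m n 𝕜} {A : Matrix m m 𝕜} (hΨ : HasDerivAt Ψ (A * Ψ t) t) (I : Finset m)
    (x : n) :
    HasDerivAt (fun s => ∑ k ∈ I, Ψ s k x ^ 2)
      (∑ k ∈ I, ∑ j ∈ I, (A + Aᵀ) j k * Ψ t k x * Ψ t j x
        + 2 * ∑ k ∈ I, ∑ j ∈ Iᶜ, A k j * Ψ t k x * Ψ t j x) t := by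
  have hsq := HasDerivAt.fun_sum fun k (_ : k ∈ I) => (hasDerivAt_matrix.1 hΨ k x).fun_pow 2
  refine hsq.congr_deriv ?_
  calc ∑ k ∈ I, ((2 : ℕ) : 𝕜) * Ψ t k x ^ (2 - 1) * (A * Ψ t) k x
      = 2 * ∑ k ∈ I, ∑ j, A k j * Ψ t k x * Ψ t j x := by
        simp only [Matrix.mul_apply, mul_sum]
        exact sum_congr rfl fun k _ => sum_congr rfl fun j _ => by push_cast; ring
    _ = _ := by
        rw [two_mul_sum_sum_eq_symm_add_compl]
        congr 1
        exact sum_congr rfl fun k _ => sum_congr rfl fun j _ => by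
          simp only [Matrix.add_apply, Matrix.transpose_apply]
          ring

end MatrixCurves

section Pencil

variable {𝕜 m n : Type*} [NontriviallyNormedField 𝕜] [Fintype m] [Fintype n] {t : 𝕜}
  {Ψ : 𝕜 → Matrix m n 𝕜} {W M : 𝕜 → Matrix n n 𝕜} {A : Matrix m m 𝕜} {W' M' : Matrix n n 𝕜}
  {lam : m → 𝕜 → 𝕜} {I : Finset m}

lemma congruence_deriv_apply_eq_zero (hΨ : HasDerivAt Ψ (A * Ψ t) t) (hW : HasDerivAt W W' t)
    {i j : m} {c : 𝕜} (hconst : ∀ᶠ s in 𝓝 t, (Ψ s * W s * (Ψ s)ᵀ) i j = c) :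
    (A * (Ψ t * W t * (Ψ t)ᵀ) + Ψ t * W' * (Ψ t)ᵀ + Ψ t * W t * (Ψ t)ᵀ * Aᵀ) i j = 0 :=
  (hasDerivAt_matrix.1 (hasDerivAt_congruence hΨ hW) i j).unique
    ((hasDerivAt_const t c).congr_of_eventuallyEq hconst)

variable [DecidableEq m]

lemma connection_add_transpose (hΨ : HasDerivAt Ψ (A * Ψ t) t) (hM : HasDerivAt M M' t)
    (horth : ∀ᶠ s in 𝓝 t, Ψ s * M s * (Ψ s)ᵀ = 1) :
    A + Aᵀ = -(Ψ t * M' * (Ψ t)ᵀ) := by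
  ext i j
  have hzero := congruence_deriv_apply_eq_zero hΨ hM (horth.mono fun s hs => congrFun₂ hs i j)
  rw [horth.self_of_nhds, Matrix.mul_one, Matrix.one_mul] at hzero
  simp only [Matrix.add_apply, Matrix.neg_apply] at hzero ⊢
  linear_combination hzero

lemma connection_mul_add_mul_transpose (hΨ : HasDerivAt Ψ (A * Ψ t) t) (hW : HasDerivAt W W' t)
    (hdiag : ∀ᶠ s in 𝓝 t, Ψ s * W s * (Ψ s)ᵀ = diagonal fun k => lam k s) {i j : m}
    (hij : i ≠ j) :
    A i j * lam j t + lam i t * A j i = -(Ψ t * W' * (Ψ t)ᵀ) i j := by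
  have hzero := congruence_deriv_apply_eq_zero hΨ hW (hdiag.mono fun s hs =>
    (congrFun₂ hs i j).trans (diagonal_apply_ne _ hij))
  simp only [hdiag.self_of_nhds, Matrix.add_apply, mul_diagonal, diagonal_mul,
    Matrix.transpose_apply] at hzero
  linear_combination hzero

lemma connection_eq_div (hΨ : HasDerivAt Ψ (A * Ψ t) t) (hW : HasDerivAt W W' t)
    (hM : HasDerivAt M M' t) (horth : ∀ᶠ s in 𝓝 t, Ψ s * M s * (Ψ s)ᵀ = 1)
    (hdiag : ∀ᶠ s in 𝓝 t, Ψ s * W s * (Ψ s)ᵀ = diagonal fun k => lam k s) {k j : m}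
    (hkj : lam k t ≠ lam j t) :
    A k j = (Ψ t * (W' - lam k t • M') * (Ψ t)ᵀ) j k / (lam k t - lam j t) := by
  have hskew : A j k + A k j = -(Ψ t * M' * (Ψ t)ᵀ) j k :=
    congrFun₂ (connection_add_transpose hΨ hM horth) j k
  have hoff := connection_mul_add_mul_transpose hΨ hW hdiag (i := j) (j := k) fun h => hkj (h ▸ rfl)
  rw [eq_div_iff (sub_ne_zero.2 hkj)]
  simp only [Matrix.mul_sub, Matrix.sub_mul, Matrix.mul_smul, Matrix.smul_mul, Matrix.sub_apply,
    Matrix.smul_apply, smul_eq_mul]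
  linear_combination lam k t * hskew - hoff

theorem hasDerivAt_sum_sq_of_congruence (hΨ : HasDerivAt Ψ (A * Ψ t) t) (hW : HasDerivAt W W' t)
    (hM : HasDerivAt M M' t) (horth : ∀ᶠ s in 𝓝 t, Ψ s * M s * (Ψ s)ᵀ = 1)
    (hdiag : ∀ᶠ s in 𝓝 t, Ψ s * W s * (Ψ s)ᵀ = diagonal fun k => lam k s)
    (hsep : ∀ k ∈ I, ∀ j ∉ I, lam k t ≠ lam j t) (x : n) :
    HasDerivAt (fun s => ∑ k ∈ I, Ψ s k x ^ 2)
      (-(∑ k ∈ I, ∑ j ∈ I, (Ψ t * M' * (Ψ t)ᵀ) j k * Ψ t k x * Ψ t j x)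
        + 2 * ∑ k ∈ I, ∑ j ∈ Iᶜ, (Ψ t * (W' - lam k t • M') * (Ψ t)ᵀ) j k
            / (lam k t - lam j t) * Ψ t k x * Ψ t j x) t := by
  refine (hasDerivAt_sum_sq_of_connection hΨ I x).congr_deriv ?_
  simp only [connection_add_transpose hΨ hM horth, Matrix.neg_apply, neg_mul, sum_neg_distrib]
  congr 2
  refine sum_congr rfl fun k hk => sum_congr rfl fun j hj => ?_
  rw [connection_eq_div hΨ hW hM horth hdiag (hsep k hk j (mem_compl.1 hj))]

end Pencil

lemma congruence_eq_diagonal {R m n : Type*} [CommSemiring R] [Fintype n] [DecidableEq m]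
    {Ψ : Matrix m n R} {W M : Matrix n n R} {lam : m → R} (horth : Ψ * M * Ψᵀ = 1)
    (heig : ∀ k, W *ᵥ Ψ k = lam k • M *ᵥ Ψ k) : Ψ * W * Ψᵀ = diagonal lam := by
  ext k l
  calc (Ψ * W * Ψᵀ) k l = Ψ k ⬝ᵥ W *ᵥ Ψ l := by rw [Matrix.mul_assoc]; rfl
    _ = lam l * (Ψ k ⬝ᵥ M *ᵥ Ψ l) := by rw [heig, dotProduct_smul, smul_eq_mul]
    _ = lam l * (Ψ * M * Ψᵀ) k l := by rw [Matrix.mul_assoc]; rfl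
    _ = diagonal lam k l := by
      rw [horth]
      obtain rfl | hkl := eq_or_ne k l
      · rw [one_apply_eq, mul_one, diagonal_apply_eq]
      · rw [one_apply_ne hkl, mul_zero, diagonal_apply_ne _ hkl]

lemma exists_hasDerivAt_connection {𝕜 n : Type*} [NontriviallyNormedField 𝕜] [Fintype n]
    [DecidableEq n] {Ψ : 𝕜 → Matrix n n 𝕜} {M Ψ' : Matrix n n 𝕜} {t : 𝕜}
    (hΨ : HasDerivAt Ψ Ψ' t) (horth : Ψ t * M * (Ψ t)ᵀ = 1) : ∃ A, HasDerivAt Ψ (A * Ψ t) t := by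
  have hinv : M * (Ψ t)ᵀ * Ψ t = 1 := by rwa [mul_eq_one_comm, ← Matrix.mul_assoc]
  exact ⟨Ψ' * (M * (Ψ t)ᵀ), by rwa [Matrix.mul_assoc, hinv, Matrix.mul_one]⟩

theorem embedding_norm_evolution_general {𝕜 V : Type*} [NontriviallyNormedField 𝕜] [Fintype V]
    [DecidableEq V] {t : 𝕜} {W M : 𝕜 → Matrix V V 𝕜} {W' M' : Matrix V V 𝕜}
    (hW : HasDerivAt W W' t) (hM : HasDerivAt M M' t) {lam : V → 𝕜 → 𝕜} {ψ : V → 𝕜 → V → 𝕜}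
    (hψ : ∀ k, DifferentiableAt 𝕜 (ψ k) t)
    (heig : ∀ k, ∀ᶠ s in 𝓝 t, W s *ᵥ ψ k s = lam k s • M s *ᵥ ψ k s)
    (horth : ∀ k l, ∀ᶠ s in 𝓝 t, ψ k s ⬝ᵥ M s *ᵥ ψ l s = if k = l then 1 else 0)
    {I : Finset V} (hsep : ∀ k ∈ I, ∀ j ∉ I, lam k t ≠ lam j t) (x : V) :
    HasDerivAt (fun s => ∑ k ∈ I, ψ k s x ^ 2)
      (-(∑ k ∈ I, ∑ j ∈ I, (ψ j t ⬝ᵥ M' *ᵥ ψ k t) * ψ k t x * ψ j t x)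
        + 2 * ∑ k ∈ I, ∑ j ∈ Iᶜ, (ψ j t ⬝ᵥ (W' - lam k t • M') *ᵥ ψ k t)
            / (lam k t - lam j t) * ψ k t x * ψ j t x) t := by
  let Ψ : 𝕜 → Matrix V V 𝕜 := fun s => of fun k => ψ k s
  have hone : ∀ᶠ s in 𝓝 t, Ψ s * M s * (Ψ s)ᵀ = 1 := by
    filter_upwards [Filter.eventually_all.2 fun k => Filter.eventually_all.2 (horth k)] with s hs
    ext k l
    rw [mul_mul_apply, one_apply]
    exact hs k l
  have hdiag : ∀ᶠ s in 𝓝 t, Ψ s * W s * (Ψ s)ᵀ = diagonal fun k => lam k s := by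
    filter_upwards [hone, Filter.eventually_all.2 heig] with s horths heigs
    exact congruence_eq_diagonal horths heigs
  have hderiv : HasDerivAt Ψ (of fun k => deriv (ψ k) t) t :=
    hasDerivAt_pi.2 fun k => (hψ k).hasDerivAt
  obtain ⟨A, hA⟩ := exists_hasDerivAt_connection hderiv hone.self_of_nhds
  simpa only [mul_mul_apply] using! hasDerivAt_sum_sq_of_congruence hA hW hM hone hdiag hsep x

section DegreeMatrix

variable {R V : Type*} [Fintype V] [DecidableEq V]

/-- The degree matrix of a weighted graph: the diagonal matrix of the row sums of its weight
matrix. -/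
def degreeMatrix [AddCommMonoid R] (W : Matrix V V R) : Matrix V V R :=
  diagonal fun x => ∑ y, W x y

lemma degreeMatrix_mulVec_apply [NonUnitalNonAssocSemiring R] (W : Matrix V V R) (v : V → R)
    (x : V) : (degreeMatrix W *ᵥ v) x = (∑ y, W x y) * v x :=
  mulVec_diagonal ..

lemma dotProduct_degreeMatrix_mulVec [NonUnitalSemiring R] (W : Matrix V V R) (v w : V → R) :
    v ⬝ᵥ degreeMatrix W *ᵥ w = ∑ x, v x * (∑ y, W x y) * w x := by
  simp only [dotProduct, degreeMatrix_mulVec_apply, mul_assoc]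

lemma dotProduct_sub_smul_degreeMatrix_mulVec [CommRing R] (E : Matrix V V R) (c : R)
    (v w : V → R) :
    v ⬝ᵥ (E - c • degreeMatrix E) *ᵥ w =
      (∑ y, ∑ z, v y * E y z * w z) - c * ∑ y, v y * (∑ z, E y z) * w y := by
  rw [sub_mulVec, smul_mulVec, dotProduct_sub, dotProduct_smul, dotProduct_degreeMatrix_mulVec,
    smul_eq_mul]
  simp only [dotProduct, mulVec, mul_sum, mul_assoc]

lemma hasDerivAt_degreeMatrix {𝕜 : Type*} [NontriviallyNormedField 𝕜] {W : 𝕜 → Matrix V V 𝕜}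
    {W' : Matrix V V 𝕜} {t : 𝕜} (hW : HasDerivAt W W' t) :
    HasDerivAt (fun s => degreeMatrix (W s)) (degreeMatrix W') t := by
  refine hasDerivAt_matrix.2 fun x y => ?_
  obtain rfl | hxy := eq_or_ne x y
  · simpa only [degreeMatrix, diagonal_apply_eq] using
      HasDerivAt.fun_sum fun z (_ : z ∈ univ) => hasDerivAt_matrix.1 hW x z
  · simpa only [degreeMatrix, diagonal_apply_ne _ hxy] using hasDerivAt_const t (0 : 𝕜)

end DegreeMatrix

/-- Evolution of the spectral embedding norm: in the deformation
`W(s) = W0 + sE` with degree matrix `D(s)` (diagonal of row sums), suppose the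
`D(s)`-orthonormal eigenpairs `(λ_k(s), ψ_k(s))` (indexed by `k : V`) are differentiable at
`t ∈ (0,1)`, satisfy the eigen-equations and orthonormality for `s` near `t`, and the
eigenvalues at `t` are pairwise distinct. Then for every `x`, `S(x,s) = ∑_{k∈I} ψ_k(s)(x)²`
satisfies
`∂S/∂t = −∑_{k,j∈I}(ψ_jᵀD'ψ_k)ψ_k(x)ψ_j(x) + 2∑_{k∈I,j∉I}[ψ_jᵀ(E−λ_kD')ψ_k/(λ_k−λ_j)]ψ_k(x)ψ_j(x)`,
where `D'` is the diagonal matrix of row sums of `E`. -/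
theorem embedding_norm_evolution
    {V : Type*} [Fintype V] [DecidableEq V] [Nonempty V]
    (B C : Finset V) (hdisj : Disjoint B C) (hunion : B ∪ C = Finset.univ)
    (hBne : B.Nonempty) (hCne : C.Nonempty)
    (W0 E : Matrix V V ℝ)
    (hW0symm : W0.IsSymm) (hW0nonneg : ∀ x y, 0 ≤ W0 x y)
    (hW0cross : ∀ x y, ((x ∈ B ∧ y ∈ C) ∨ (x ∈ C ∧ y ∈ B)) → W0 x y = 0)
    (hEsymm : E.IsSymm) (hEnonneg : ∀ x y, 0 ≤ E x y)
    (hEcross : ∀ x y, ¬((x ∈ B ∧ y ∈ C) ∨ (x ∈ C ∧ y ∈ B)) → E x y = 0)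
    (d0low : ℝ)
    (hd0low : d0low = Finset.univ.inf' Finset.univ_nonempty (fun x => ∑ y, W0 x y))
    (hd0pos : 0 < d0low)
    (t : ℝ) (ht : t ∈ Set.Ioo (0 : ℝ) 1)
    (lam : V → ℝ → ℝ) (lamd : V → ℝ)
    (hlam : ∀ k, HasDerivAt (lam k) (lamd k) t)
    (ψ : V → ℝ → V → ℝ) (ψd : V → V → ℝ)
    (hψ : ∀ k x, HasDerivAt (fun s => ψ k s x) (ψd k x) t)
    (heig : ∀ k, ∀ᶠ s in nhds t, ∀ x,
      ∑ y, (W0 x y + s * E x y) * ψ k s y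
        = lam k s * ((∑ y, (W0 x y + s * E x y)) * ψ k s x))
    (horth : ∀ k l, ∀ᶠ s in nhds t,
      ∑ x, ψ k s x * (∑ y, (W0 x y + s * E x y)) * ψ l s x = if k = l then 1 else 0)
    (hdist : Function.Injective fun k => lam k t)
    (I : Finset V) :
    ∀ x, HasDerivAt (fun s => ∑ k ∈ I, (ψ k s x) ^ 2)
      (-(∑ k ∈ I, ∑ j ∈ I, (∑ y, ψ j t y * (∑ z, E y z) * ψ k t y) * ψ k t x * ψ j t x)
        + 2 * ∑ k ∈ I, ∑ j ∈ Iᶜ,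
            (((∑ y, ∑ z, ψ j t y * E y z * ψ k t z)
                - lam k t * (∑ y, ψ j t y * (∑ z, E y z) * ψ k t y))
              / (lam k t - lam j t)) * ψ k t x * ψ j t x) t := by
  have hW : HasDerivAt (fun s => W0 + s • E) E t :=
    hasDerivAt_matrix.2 fun x y => by
      simpa using! ((hasDerivAt_id t).mul_const (E x y)).const_add (W0 x y)
  intro x
  simpa only [dotProduct_degreeMatrix_mulVec, dotProduct_sub_smul_degreeMatrix_mulVec] using
    embedding_norm_evolution_general hW (hasDerivAt_degreeMatrix hW) (lam := lam) (ψ := ψ)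
      (fun k => (hasDerivAt_pi.2 (hψ k)).differentiableAt)
      (fun k => (heig k).mono fun s hs => funext fun y =>
        (hs y).trans (by simp [degreeMatrix_mulVec_apply]))
      (fun k l => by simpa [dotProduct_degreeMatrix_mulVec] using horth k l)
      (fun k hk j hj => hdist.ne (ne_of_mem_of_not_mem hk hj)) x
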